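/- Let Γ = k[x]/(x^a) with a ≥ 2 and the grading |x| = 1. Then the even Hochschild cohomology ring of Γ is HH^{2*}(Γ) ≅ k[x,z]/(x^a, a·x^{a-1}·z), where |x| = (0, 1) and |z| = (2, 0) in the (ℤ ⊕ ℤ)-grading (cohomological degree, internal degree). -/

import Mathlib

noncomputable section

open CategoryTheory Abelian MvPolynomial TensorProduct MulOpposite

/-- The truncated polynomial algebra `Γ = k[x]/(x^a)`, graded by `|x| = 1`. -/
abbrev TruncPoly (k : Type) [Field k] (a : ℕ) : Type :=
  Polynomial k ⧸ (Ideal.span {Polynomial.X ^ a} : Ideal (Polynomial k))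

/-- The enveloping algebra `Γᵉ = Γ ⊗[k] Γᵒᵖ`. -/
abbrev TruncEnv (k : Type) [Field k] (a : ℕ) : Type :=
  TruncPoly k a ⊗[k] (TruncPoly k a)ᵐᵒᵖ

/-- The commutative ring `k[x,z]/(x^a, a·x^{a-1}·z)`, with `x = X 0`, `z = X 1`. -/
abbrev HHTarget (k : Type) [Field k] (a : ℕ) : Type :=
  MvPolynomial (Fin 2) k ⧸
    (Ideal.span {(X 0 : MvPolynomial (Fin 2) k) ^ a,
        (a : MvPolynomial (Fin 2) k) * (X 0) ^ (a - 1) * X 1} :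
      Ideal (MvPolynomial (Fin 2) k))

/-- The component of `k[x,z]/(x^a, a·x^{a-1}·z)` of cohomological degree `2j` (i.e.
`z`-degree `j`; the generator `x` has cohomological degree `0` and internal degree `1`,
and `z` has cohomological degree `2` and internal degree `0`): the span of the images of
the monomials `x^i z^j`. -/
def hhTargetDeg (k : Type) [Field k] (a : ℕ) (j : ℕ) : Submodule k (HHTarget k a) :=
  Submodule.span k ((fun i : ℕ => (Ideal.Quotient.mk _
      ((X 0 : MvPolynomial (Fin 2) k) ^ i * (X 1) ^ j) : HHTarget k a)) '' Set.univ)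


section per
universe v u w
variable {C : Type u} [Category.{v} C] [Abelian C] [HasExt.{w} C]
  {M K P Q : C} {f : K ⟶ P} {g : P ⟶ M} {f' : M ⟶ Q} {g' : Q ⟶ K}
  {h1 : f ≫ g = 0} {h2 : f' ≫ g' = 0}
  (S1 : (ShortComplex.mk f g h1).ShortExact) (S2 : (ShortComplex.mk f' g' h2).ShortExact)

def perZ : Ext M M 2 := S1.extClass.comp S2.extClass (by norm_num)

theorem perZ_comp {n m l : ℕ} {Y : C} (x : Ext M Y n) (h : 2 + n = m) (hl : 1 + n = l) :
    (perZ S1 S2).comp x h = S1.extClass.comp (S2.extClass.comp x hl) (by omega) := by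
  unfold perZ
  apply Ext.comp_assoc
  omega

include S1 S2 in
theorem perZ_surj [Projective P] [Projective Q] {n m : ℕ} {Y : C} (h : 2 + n = m) (y : Ext M Y m) :
    ∃ x : Ext M Y n, (perZ S1 S2).comp x h = y := by
  obtain ⟨l, hl⟩ : ∃ l, 1 + n = l := ⟨_, rfl⟩
  have hlm : 1 + l = m := by omega
  obtain ⟨y1, hy1⟩ := Ext.contravariant_sequence_exact₃ S1 Y y
    (by obtain rfl : m = l + 1 := by omega
        exact Ext.eq_zero_of_projective _) hlm
  obtain ⟨y2, hy2⟩ := Ext.contravariant_sequence_exact₃ S2 Y y1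
    (by obtain rfl : l = n + 1 := by omega
        exact Ext.eq_zero_of_projective _) hl
  exact ⟨y2, by rw [perZ_comp S1 S2 y2 h hl, hy2, hy1]⟩

theorem perZ_zero [Projective P] [Projective Q] {n m : ℕ} {Y : C} (h : 2 + n = m) (x : Ext M Y n)
    (hx : (perZ S1 S2).comp x h = 0) :
    ∃ t : Ext Q Y n, (Ext.mk₀ f').comp t (zero_add n) = x := by
  obtain ⟨l, hl⟩ : ∃ l, 1 + n = l := ⟨_, rfl⟩
  have hlm : 1 + l = m := by omega
  rw [perZ_comp S1 S2 x h hl] at hx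
  obtain ⟨t, ht⟩ := Ext.contravariant_sequence_exact₁ S1 Y _ hlm hx
  have ht0 : t = 0 := by
    obtain rfl : l = n + 1 := by omega
    exact Ext.eq_zero_of_projective _
  rw [ht0, Ext.comp_zero] at ht
  exact Ext.contravariant_sequence_exact₁ S2 Y _ hl ht.symm

theorem perZ_inj [Projective P] [Projective Q] {n m : ℕ} {Y : C} (h : 2 + n = m) (x : Ext M Y n)
    (hn : n ≠ 0) (hx : (perZ S1 S2).comp x h = 0) : x = 0 := by
  obtain ⟨t, rfl⟩ := perZ_zero S1 S2 h x hx
  obtain ⟨n, rfl⟩ := Nat.exists_eq_succ_of_ne_zero hn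
  rw [Ext.eq_zero_of_projective t, Ext.comp_zero]

theorem perZ_kill {n m : ℕ} {Y : C} (h : 2 + n = m) 
    (t : Ext Q Y n) : (perZ S1 S2).comp ((Ext.mk₀ f').comp t (zero_add n)) h = 0 := by
  rw [perZ_comp S1 S2 _ h rfl]
  have := S2.extClass_comp_assoc t (h := (rfl : 1 + n = 1 + n))
  dsimp only at this
  rw [this, Ext.comp_zero]

def zp : ∀ j : ℕ, Ext M M (2 * j)
  | 0 => Ext.mk₀ (𝟙 M)
  | j + 1 => (perZ S1 S2).comp (zp j) (by ring)

theorem zp_comp (i j l : ℕ) (h : i + j = l) : (zp S1 S2 i).comp (zp S1 S2 j) (by subst h; ring) = zp S1 S2 l := by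
  induction i generalizing l with
  | zero => 
    obtain rfl : j = l := by omega
    exact Ext.mk₀_id_comp _
  | succ i ih =>
    obtain rfl : (i + j) + 1 = l := by omega
    simp only [zp]
    rw [Ext.comp_assoc _ _ _ _ (show 2 * i + 2 * j = 2 * (i + j) by ring) (by ring), ih _ rfl]

end per

theorem ext_abs (R : Type) [CommRing R] (M : ModuleCat.{0} R) [HasExt.{1} (ModuleCat.{0} R)]
    (m : M) (u w : R) (hm : ∀ x : M, ∃ r : R, r • m = x) (hu : ∀ r : R, r • m = 0 ↔ u ∣ r)
    (huw : ∀ r, u * r = 0 ↔ w ∣ r) (hwu : ∀ r, w * r = 0 ↔ u ∣ r) :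
    ∃ φ : ∀ j : ℕ, R →+ Ext M M (2 * j), (∀ j, Function.Surjective (φ j)) ∧
      φ 0 1 = Ext.mk₀ (𝟙 M) ∧
      (∀ i j r s, (φ i r).comp (φ j s) (by ring) = φ (i + j) (r * s)) ∧
      (∀ r, φ 0 r = 0 ↔ r • m = 0) ∧
      (∀ j r, φ (j + 1) r = 0 ↔ ∃ s : R, r • m = s • w • m) := by
  let π : R →ₗ[R] M := LinearMap.toSpanSingleton R M m
  have hπ : Function.Surjective π := fun x => by
    obtain ⟨r, hr⟩ := hm x; exact ⟨r, by simpa [π] using hr⟩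
  have hker : ∀ r, r ∈ LinearMap.ker π ↔ u ∣ r := fun r => by simp [π, hu]
  let ι0 : (R ⧸ LinearMap.ker π) →ₗ[R] R := (LinearMap.ker π).liftQ (LinearMap.toSpanSingleton R R w)
    (fun r hr => by
      rw [hker, ← hwu] at hr
      simpa [mul_comm] using hr)
  let eM := LinearMap.quotKerEquivOfSurjective π hπ
  let ι : M →ₗ[R] R := ι0 ∘ₗ eM.symm.toLinearMap
  have hι : ∀ r : R, ι (r • m) = r * w := fun r => by
    have : eM.symm (r • m) = Submodule.Quotient.mk r := by
      rw [LinearEquiv.symm_apply_eq]; rfl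
    change ι0 (eM.symm (r • m)) = r * w
    rw [this]; rfl
  let p : R →ₗ[R] LinearMap.ker π := LinearMap.codRestrict _ (LinearMap.mulLeft R u)
    (fun r => by rw [hker]; simp)
  have hp : ∀ r, (p r : R) = u * r := fun r => rfl
  let f : ModuleCat.of R (LinearMap.ker π) ⟶ ModuleCat.of R R := ModuleCat.ofHom (LinearMap.ker π).subtype
  let g : ModuleCat.of R R ⟶ M := ModuleCat.ofHom π
  let f' : M ⟶ ModuleCat.of R R := ModuleCat.ofHom ι
  let g' : ModuleCat.of R R ⟶ ModuleCat.of R (LinearMap.ker π) := ModuleCat.ofHom p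
  have h1 : f ≫ g = 0 := by
    ext x; exact x.2
  have h2 : f' ≫ g' = 0 := by
    ext x
    obtain ⟨r, rfl⟩ := hm x
    change ((p (ι (r • m)) : LinearMap.ker π) : R) = 0
    rw [hι, hp, huw]; simp
  have S1 : (ShortComplex.mk f g h1).ShortExact :=
    { exact := by
        rw [ShortComplex.ShortExact.moduleCat_exact_iff_function_exact]
        intro x
        change π x = 0 ↔ _
        exact ⟨fun h => ⟨⟨x, h⟩, rfl⟩, by rintro ⟨y, rfl⟩; exact y.2⟩
      mono_f := by
        rw [ModuleCat.mono_iff_injective]; exact Subtype.val_injective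
      epi_g := by
        rw [ModuleCat.epi_iff_surjective]; exact hπ }
  have S2 : (ShortComplex.mk f' g' h2).ShortExact :=
    { exact := by
        rw [ShortComplex.ShortExact.moduleCat_exact_iff_function_exact]
        intro x
        change p x = 0 ↔ ∃ y, ι y = x
        rw [Subtype.ext_iff, hp]
        change u * x = 0 ↔ _
        rw [huw]
        constructor
        · rintro ⟨c, rfl⟩
          exact ⟨c • m, by rw [hι, mul_comm]⟩
        · rintro ⟨y, rfl⟩
          obtain ⟨r, rfl⟩ := hm y
          rw [hι]; simp
      mono_f := by
        rw [ModuleCat.mono_iff_injective]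
        change Function.Injective ι
        rw [injective_iff_map_eq_zero]
        intro x hx
        obtain ⟨r, rfl⟩ := hm x
        rw [hι, mul_comm, hwu, ← hu] at hx
        exact hx
      epi_g := by
        rw [ModuleCat.epi_iff_surjective]
        change Function.Surjective p
        rintro ⟨x, hx⟩
        obtain ⟨c, rfl⟩ := (hker x).1 hx
        exact ⟨c, rfl⟩ }
  have : Projective (ModuleCat.of R R) := ModuleCat.projective_of_free (Module.Basis.singleton Unit R)
  have hend : ∀ h : M ⟶ M, ∀ r : R, h.hom m = r • m → h = r • 𝟙 M := by
    intro h r hr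
    ext x
    obtain ⟨s, rfl⟩ := hm x
    change h.hom (s • m) = r • (s • m)
    rw [map_smul, hr, smul_comm]
  have hz : ∀ r : R, r • Ext.mk₀ (𝟙 M) = 0 ↔ r • m = 0 := by
    intro r
    rw [← Ext.mk₀_smul, Ext.mk₀_eq_zero_iff]
    constructor
    · intro h
      exact congrArg (fun h : M ⟶ M => h.hom m) h
    · intro h
      have := hend 0 r (by rw [h]; rfl)
      exact this.symm
  refine ⟨fun j => (LinearMap.toSpanSingleton R _ (zp S1 S2 j)).toAddMonoidHom, ?_, ?_, ?_, ?_, ?_⟩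
  · intro j
    induction j with
    | zero =>
      intro x
      obtain ⟨h, rfl⟩ := (Ext.mk₀_bijective M M).2 x
      obtain ⟨r, hr⟩ := hm (h.hom m)
      refine ⟨r, ?_⟩
      rw [hend h r hr.symm, Ext.mk₀_smul]
      rfl
    | succ j ih =>
      intro y
      obtain ⟨x, rfl⟩ := perZ_surj S1 S2 (show 2 + 2 * j = 2 * (j + 1) by ring) y
      obtain ⟨r, rfl⟩ := ih x
      refine ⟨r, ?_⟩
      exact (Ext.comp_smul _ _ _ _).symm
  · exact one_smul R (Ext.mk₀ (𝟙 M))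
  · intro i j r s
    change (r • zp S1 S2 i).comp (s • zp S1 S2 j) _ = (r * s) • zp S1 S2 (i + j)
    rw [Ext.smul_comp, Ext.comp_smul, zp_comp S1 S2 i j _ rfl, smul_smul]
  · exact hz
  · intro j r
    change r • zp S1 S2 (j + 1) = 0 ↔ _
    induction j with
    | zero =>
      rw [zp, ← Ext.comp_smul]
      change (perZ S1 S2).comp (r • Ext.mk₀ (𝟙 M)) _ = 0 ↔ _
      constructor
      · intro h
        obtain ⟨t, ht⟩ := perZ_zero S1 S2 _ _ h
        obtain ⟨t, rfl⟩ := (Ext.mk₀_bijective _ _).2 t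
        rw [Ext.mk₀_comp_mk₀, ← Ext.mk₀_smul] at ht
        have ht := (Ext.mk₀_bijective _ _).1 ht
        obtain ⟨s, hs⟩ := hm (t.hom (1 : R))
        refine ⟨s, ?_⟩
        have h3 := congrArg (fun h : M ⟶ M => h.hom m) ht
        change t.hom (ι m) = r • m at h3
        have h4 := hι 1
        rw [one_smul, one_mul] at h4
        rw [← h3, h4, smul_comm, hs]
        have := t.hom.map_smul w (1 : R)
        rw [smul_eq_mul, mul_one] at this
        exact this
      · rintro ⟨s, hs⟩
        have : r • Ext.mk₀ (𝟙 M) = (Ext.mk₀ f').comp (Ext.mk₀ (ModuleCat.ofHom (LinearMap.toSpanSingleton R M (s • m)) : ModuleCat.of R R ⟶ M)) (zero_add 0) := by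
          rw [Ext.mk₀_comp_mk₀, ← Ext.mk₀_smul]
          congr 1
          symm
          apply hend
          change LinearMap.toSpanSingleton R M (s • m) (ι m) = r • m
          have h4 := hι 1
          rw [one_smul, one_mul] at h4
          rw [h4, LinearMap.toSpanSingleton_apply, hs, smul_comm]
        rw [this]
        exact perZ_kill S1 S2 _ _
    | succ j ih =>
      rw [← ih, zp, ← Ext.comp_smul]
      constructor
      · intro h
        exact perZ_inj S1 S2 _ _ (by omega) h
      · intro h
        rw [h, Ext.comp_zero]

/-- abstract quotient lemma -/
theorem ann_aux {B R : Type} [CommRing B] [CommRing R] (q : B →+* R) (hq : Function.Surjective q)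
    (U W : B) (hker : ∀ b, q b = 0 ↔ U * W ∣ b) (hreg : IsLeftRegular U) (r : R) :
    q U * r = 0 ↔ q W ∣ r := by
  obtain ⟨b, rfl⟩ := hq r
  rw [← map_mul, hker]
  constructor
  · rintro ⟨c, hc⟩
    have : b = W * c := hreg (by simpa [mul_assoc] using hc)
    rw [this, map_mul]; exact dvd_mul_right _ _
  · rintro ⟨c, hc⟩
    obtain ⟨c, rfl⟩ := hq c
    have : q (b - W * c) = 0 := by rw [map_sub, hc, map_mul, sub_self]
    obtain ⟨d, hd⟩ := (hker _).1 this
    exact ⟨c + U * d, by rw [eq_add_of_sub_eq hd]; ring⟩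

section gen
variable (k : Type) [Field k] (a : ℕ) {G : Type} [CommRing G] [Algebra k G] (t : G)

variable (G) in
def incR : G →ₐ[k] (G ⊗[k] Gᵐᵒᵖ) :=
  (Algebra.TensorProduct.includeRight).comp (AlgEquiv.toOpposite k G).toAlgHom

variable (G) in
theorem incR_apply (g : G) : incR k G g = 1 ⊗ₜ op g := rfl

def qq : Polynomial G →+* (G ⊗[k] Gᵐᵒᵖ) :=
  Polynomial.eval₂RingHom (Algebra.TensorProduct.includeLeftRingHom) (incR k G t)

theorem qq_C (g : G) : qq k t (Polynomial.C g) = g ⊗ₜ 1 := by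
  simp [qq]

theorem qq_X : qq k t Polynomial.X = 1 ⊗ₜ op t := by
  simp [qq, incR_apply]

theorem qq_surj (hgen : ∀ g : G, ∃ p : Polynomial k, Polynomial.aeval t p = g) : Function.Surjective (qq k t) := by
  intro r
  induction r using TensorProduct.induction_on with
  | zero => exact ⟨0, map_zero _⟩
  | add x y hx hy =>
    obtain ⟨x, rfl⟩ := hx
    obtain ⟨y, rfl⟩ := hy
    exact ⟨x + y, map_add _ _ _⟩
  | tmul g v =>
    obtain ⟨v, rfl⟩ := MulOpposite.op_surjective v
    obtain ⟨p, rfl⟩ := hgen v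
    refine ⟨Polynomial.C g * p.map (algebraMap k _), ?_⟩
    rw [map_mul, qq_C]
    have : qq k t (p.map (algebraMap k _)) = 1 ⊗ₜ op (Polynomial.aeval t p) := by
      rw [← incR_apply, ← Polynomial.aeval_algHom_apply]
      unfold qq
      rw [Polynomial.coe_eval₂RingHom, Polynomial.eval₂_map, Polynomial.aeval_def]
      congr 1
    rw [this, Algebra.TensorProduct.tmul_mul_tmul, mul_one, one_mul]

variable (G) in
abbrev BQ : Type := Polynomial G ⧸ (Ideal.span {(Polynomial.X : Polynomial G) ^ a})

theorem qq_ker (ht : t ^ a = 0)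
    (lft : ∀ (A : Type) [CommRing A] [Algebra k A] (x : A), x ^ a = 0 → ∃ f : G →ₐ[k] A, f t = x)
    (p : Polynomial G) : qq k t p = 0 ↔ Polynomial.X ^ a ∣ p := by
  constructor
  · intro h
    obtain ⟨f, hf⟩ := lft (BQ a G) (Ideal.Quotient.mk _ Polynomial.X) (by
      rw [← map_pow, Ideal.Quotient.eq_zero_iff_mem]
      exact Ideal.subset_span rfl)
    let ss : (G ⊗[k] Gᵐᵒᵖ) →ₐ[k] BQ a G :=
      Algebra.TensorProduct.lift (IsScalarTower.toAlgHom k G (BQ a G))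
        (f.comp (AlgEquiv.toOpposite k G).symm.toAlgHom)
        (fun _ _ => Commute.all _ _)
    have hs : ss.toRingHom.comp (qq k t) = Ideal.Quotient.mk _ := by
      apply Polynomial.ringHom_ext
      · intro g
        change ss (qq k t (Polynomial.C g)) = _
        rw [qq_C]
        simp only [ss]
        rw [Algebra.TensorProduct.lift_tmul, map_one, mul_one]
        rfl
      · change ss (qq k t (Polynomial.X)) = _
        rw [qq_X]
        simp only [ss]
        rw [Algebra.TensorProduct.lift_tmul, map_one, one_mul]
        exact hf
    have := RingHom.congr_fun hs p
    change ss (qq k t p) = _ at this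
    rw [h, map_zero, eq_comm, Ideal.Quotient.eq_zero_iff_mem, Ideal.mem_span_singleton] at this
    exact this
  · rintro ⟨c, rfl⟩
    rw [map_mul, map_pow, qq_X, Algebra.TensorProduct.tmul_pow, ← MulOpposite.op_pow, ht]
    simp

def UU : Polynomial G := Polynomial.X - Polynomial.C t
def WW : Polynomial G :=
  ∑ i ∈ Finset.range a, Polynomial.X ^ i * Polynomial.C t ^ (a - 1 - i)

theorem UW (ht : t ^ a = 0) : UU t * WW a t = Polynomial.X ^ a := by
  unfold UU WW
  rw [mul_comm, Commute.geom_sum₂_mul (Commute.all _ _), ← Polynomial.C_pow, ht]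
  simp

theorem UU_reg : IsLeftRegular (UU t) :=
  (Polynomial.monic_X_sub_C _).isRegular.left

theorem WW_reg (ht : t ^ a = 0) : IsLeftRegular (WW a t) := by
  have h : IsLeftRegular (UU t * WW a t) := by
    rw [UW a t ht]; exact (Polynomial.monic_X_pow a).isRegular.left
  exact IsLeftRegular.of_mul h

theorem WW_eval : (WW a t).eval t = a * t ^ (a - 1) := by
  unfold WW
  rw [Polynomial.eval_finsetSum, Finset.sum_congr rfl (g := fun _ => t ^ (a - 1)), Finset.sum_const]
  · simp
  · intro i hi
    have := Finset.mem_range.1 hi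
    simp only [Polynomial.eval_mul, Polynomial.eval_pow, Polynomial.eval_X, Polynomial.eval_C]
    rw [← pow_add]; congr 1; omega

section mod
variable [Module ((G ⊗[k] Gᵐᵒᵖ)) G]
    (hbi : ∀ u v x : G,
      ((u ⊗ₜ op v : (G ⊗[k] Gᵐᵒᵖ))) • x = u * x * v)
include hbi

theorem qq_smul (p : Polynomial G) (g : G) :
    qq k t p • g = p.eval t * g := by
  induction p using Polynomial.induction_on' with
  | add p q hp hq => rw [map_add, add_smul, hp, hq, Polynomial.eval_add, add_mul]
  | monomial n c =>
    rw [← Polynomial.C_mul_X_pow_eq_monomial, map_mul, map_pow, qq_C, qq_X,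
      Algebra.TensorProduct.tmul_pow, ← MulOpposite.op_pow, Algebra.TensorProduct.tmul_mul_tmul, one_mul,
      hbi]
    simp
    ring

theorem gen_main (hgen : ∀ g : G, ∃ p : Polynomial k, Polynomial.aeval t p = g) (ht : t ^ a = 0)
    (lft : ∀ (A : Type) [CommRing A] [Algebra k A] (x : A), x ^ a = 0 → ∃ f : G →ₐ[k] A, f t = x)
    [HasExt.{1} (ModuleCat.{0} (G ⊗[k] Gᵐᵒᵖ))] :
    ∃ (φ : ∀ j : ℕ, (G ⊗[k] Gᵐᵒᵖ) →+ Ext (ModuleCat.of (G ⊗[k] Gᵐᵒᵖ) G) (ModuleCat.of (G ⊗[k] Gᵐᵒᵖ) G) (2 * j))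
      (μ : (G ⊗[k] Gᵐᵒᵖ) →+* G),
      (∀ j, Function.Surjective (φ j)) ∧ Function.Surjective μ ∧
      φ 0 1 = Ext.mk₀ (𝟙 (ModuleCat.of (G ⊗[k] Gᵐᵒᵖ) G)) ∧
      (∀ i j r s, (φ i r).comp (φ j s) (by ring) = φ (i + j) (r * s)) ∧
      (∀ r, φ 0 r = 0 ↔ μ r = 0) ∧
      (∀ j r, φ (j + 1) r = 0 ↔ ∃ s : G, μ r = s * (a * t ^ (a - 1))) := by
  have hs := qq_surj k t hgen
  have hk := qq_ker k a t ht lft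
  have hsm := qq_smul k t hbi
  have hUW := UW a t ht
  have hm1 : ∀ (r : G ⊗[k] Gᵐᵒᵖ) (x : G), r • x = (r • (1 : G)) * x := by
    intro r x
    obtain ⟨p, rfl⟩ := hs r
    rw [hsm, hsm, mul_one]
  let μ : (G ⊗[k] Gᵐᵒᵖ) →+* G :=
    { toFun := fun r => r • (1 : G)
      map_one' := one_smul _ _
      map_mul' := fun r s => by rw [mul_smul, hm1]
      map_zero' := zero_smul (G ⊗[k] Gᵐᵒᵖ) (1 : G)
      map_add' := fun r s => add_smul _ _ _ }
  have hμ : ∀ p, μ (qq k t p) = p.eval t := fun p => (hsm p 1).trans (mul_one _)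
  have hμs : Function.Surjective μ := fun g => ⟨qq k t (Polynomial.C g), by rw [hμ, Polynomial.eval_C]⟩
  have hU0 : ∀ p, (qq k t) (UU t) ∣ qq k t p ↔ p.eval t = 0 := by
    intro p
    constructor
    · rintro ⟨c, hc⟩
      rw [← hμ, hc, map_mul, hμ]
      simp [UU]
    · intro h
      obtain ⟨c, rfl⟩ := Polynomial.dvd_iff_isRoot.2 h
      rw [map_mul]; exact dvd_mul_right _ _
  obtain ⟨φ, h1, h2, h3, h4, h5⟩ := ext_abs (G ⊗[k] Gᵐᵒᵖ) (ModuleCat.of (G ⊗[k] Gᵐᵒᵖ) G) (1 : G)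
    (qq k t (UU t)) (qq k t (WW a t))
    (fun x => hμs x)
    (fun r => by
      obtain ⟨p, rfl⟩ := hs r
      rw [hU0, ← hμ]; rfl)
    (fun r => ann_aux (qq k t) hs _ _ (by rw [hUW]; exact hk) (UU_reg t) r)
    (fun r => ann_aux (qq k t) hs _ _ (by rw [mul_comm, hUW]; exact hk) (WW_reg a t ht) r)
  refine ⟨φ, μ, h1, hμs, h2, h3, h4, fun j r => (h5 j r).trans ?_⟩
  change (∃ s : G ⊗[k] Gᵐᵒᵖ, μ r = s • (qq k t (WW a t) • (1 : G))) ↔ _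
  have hw : qq k t (WW a t) • (1 : G) = a * t ^ (a - 1) := by
    rw [hsm, WW_eval, mul_one]
  rw [hw]
  constructor
  · rintro ⟨s, h⟩
    exact ⟨μ s, by rw [h, hm1]; rfl⟩
  · rintro ⟨s, h⟩
    obtain ⟨s, rfl⟩ := hμs s
    exact ⟨s, by rw [h, hm1]; rfl⟩
end mod
end gen



section alg
variable (k : Type) [Field k] (a : ℕ)

def tx : TruncPoly k a := Ideal.Quotient.mk _ Polynomial.X

theorem tx_pow : tx k a ^ a = 0 := by
  unfold tx
  rw [← map_pow, Ideal.Quotient.eq_zero_iff_mem]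
  exact Ideal.subset_span rfl

theorem trunc_algHom_ext {A : Type} [Semiring A] [Algebra k A] (f g : TruncPoly k a →ₐ[k] A)
    (h : f (tx k a) = g (tx k a)) : f = g := by
  apply Ideal.Quotient.algHom_ext
  apply Polynomial.algHom_ext
  exact h

def tlift {A : Type} [CommRing A] [Algebra k A] (t : A) (h : t ^ a = 0) : TruncPoly k a →ₐ[k] A :=
  Ideal.Quotient.liftₐ _ (Polynomial.aeval t) (by
    intro p hp
    obtain ⟨c, rfl⟩ := Ideal.mem_span_singleton.1 hp
    simp [h])

theorem tlift_tx {A : Type} [CommRing A] [Algebra k A] (t : A) (h : t ^ a = 0) :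
    tlift k a t h (tx k a) = t := by
  unfold tlift tx
  erw [Ideal.Quotient.liftₐ_apply, Ideal.Quotient.lift_mk]
  simp

theorem mk_surj_tx (g : TruncPoly k a) : ∃ p : Polynomial k, Polynomial.aeval (tx k a) p = g := by
  obtain ⟨p, rfl⟩ := Ideal.Quotient.mk_surjective g
  refine ⟨p, ?_⟩
  have : (Polynomial.aeval (tx k a)) = (Ideal.Quotient.mkₐ k (Ideal.span {Polynomial.X ^ a} : Ideal (Polynomial k))) := by
    apply Polynomial.algHom_ext
    simp [tx]
  exact DFunLike.congr_fun this p

/-! target -/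
abbrev hX : HHTarget k a := Ideal.Quotient.mk _ (X 0)
abbrev hZ : HHTarget k a := Ideal.Quotient.mk _ (X 1)

theorem hX_pow : hX k a ^ a = 0 := by
  rw [← map_pow, Ideal.Quotient.eq_zero_iff_mem]
  exact Ideal.subset_span (by simp)

theorem hrel : (a : HHTarget k a) * hX k a ^ (a - 1) * hZ k a = 0 := by
  have : (a : HHTarget k a) = Ideal.Quotient.mk _ (a : MvPolynomial (Fin 2) k) := by simp
  rw [this, ← map_pow, ← map_mul, ← map_mul, Ideal.Quotient.eq_zero_iff_mem]
  exact Ideal.subset_span (by simp)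

def gam : TruncPoly k a →ₐ[k] HHTarget k a := tlift k a (hX k a) (hX_pow k a)

theorem gam_tx : gam k a (tx k a) = hX k a := tlift_tx _ _ _ _

def hlift {A : Type} [CommRing A] [Algebra k A] (x z : A) (hx : x ^ a = 0)
    (hz : (a : A) * x ^ (a - 1) * z = 0) : HHTarget k a →ₐ[k] A :=
  Ideal.Quotient.liftₐ _ (MvPolynomial.aeval ![x, z]) (by
    intro p hp
    have : (Ideal.span {(X 0 : MvPolynomial (Fin 2) k) ^ a,
        (a : MvPolynomial (Fin 2) k) * (X 0) ^ (a - 1) * X 1}) ≤ RingHom.ker (MvPolynomial.aeval ![x, z] : MvPolynomial (Fin 2) k →ₐ[k] A) := by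
      rw [Ideal.span_le]
      rintro q (rfl | rfl)
      · simp [RingHom.mem_ker, hx]
      · simp [RingHom.mem_ker, hz]
    exact this hp)

theorem hlift_X {A : Type} [CommRing A] [Algebra k A] (x z : A) (hx : x ^ a = 0)
    (hz : (a : A) * x ^ (a - 1) * z = 0) : hlift k a x z hx hz (hX k a) = x := by
  unfold hlift
  erw [Ideal.Quotient.liftₐ_apply, Ideal.Quotient.lift_mk]
  simp
theorem hlift_Z {A : Type} [CommRing A] [Algebra k A] (x z : A) (hx : x ^ a = 0)
    (hz : (a : A) * x ^ (a - 1) * z = 0) : hlift k a x z hx hz (hZ k a) = z := by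
  unfold hlift
  erw [Ideal.Quotient.liftₐ_apply, Ideal.Quotient.lift_mk]
  simp

theorem gam_inj (g : TruncPoly k a) : gam k a g = 0 ↔ g = 0 := by
  constructor
  · intro h
    have : (hlift k a (tx k a) 0 (tx_pow k a) (by simp)).comp (gam k a) = AlgHom.id k _ := by
      apply trunc_algHom_ext
      rw [AlgHom.comp_apply, gam_tx, hlift_X]; rfl
    have := DFunLike.congr_fun this g
    rw [AlgHom.comp_apply, h, map_zero] at this
    exact this.symm
  · rintro rfl; exact map_zero _

theorem gam_z_aux (j : ℕ) (g : TruncPoly k a) (h : gam k a g * hZ k a ^ (j + 1) = 0)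
    (Q : Type) [CommRing Q] [Algebra k Q] (ρ : TruncPoly k a →ₐ[k] Q)
    (hρ : (a : Q) * ρ (tx k a) ^ (a - 1) = 0) : ρ g = 0 := by
  have hy : ρ (tx k a) ^ a = 0 := by
    rw [← map_pow, tx_pow, map_zero]
  have hh1 : (Polynomial.C (ρ (tx k a)) : Polynomial Q) ^ a = 0 := by
    rw [← Polynomial.C_pow, hy, map_zero]
  have hh2 : (a : Polynomial Q) * (Polynomial.C (ρ (tx k a))) ^ (a - 1) * Polynomial.X = 0 := by
    rw [← Polynomial.C_pow, ← Polynomial.C_eq_natCast, ← Polynomial.C_mul, hρ, map_zero, zero_mul]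
  have : (hlift k a (Polynomial.C (ρ (tx k a))) Polynomial.X hh1 hh2).comp (gam k a) =
      (IsScalarTower.toAlgHom k Q (Polynomial Q)).comp ρ := by
    apply trunc_algHom_ext
    rw [AlgHom.comp_apply, gam_tx, hlift_X]; rfl
  have := DFunLike.congr_fun this g
  rw [AlgHom.comp_apply] at this
  have h3 := congrArg (hlift k a (Polynomial.C (ρ (tx k a))) Polynomial.X hh1 hh2) h
  rw [map_mul, map_pow, hlift_Z, this, map_zero] at h3
  have h4 : (Polynomial.C (ρ g)) * Polynomial.X ^ (j + 1) = 0 := h3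
  rwa [Polynomial.C_mul_X_pow_eq_monomial, Polynomial.monomial_eq_zero_iff] at h4

abbrev Q1 : Type := TruncPoly k a ⧸ (Ideal.span {(a : TruncPoly k a) * tx k a ^ (a - 1)})

theorem gam_z (j : ℕ) (g : TruncPoly k a) : gam k a g * hZ k a ^ (j + 1) = 0 ↔
    ∃ s, g = s * (a * tx k a ^ (a - 1)) := by
  constructor
  · intro h
    have h4 : (Ideal.Quotient.mk _ g : Q1 k a) = 0 := by
      refine gam_z_aux k a j g h (Q1 k a) (Ideal.Quotient.mkₐ k _) ?_
      rw [← map_natCast (Ideal.Quotient.mkₐ k (Ideal.span {(a : TruncPoly k a) * tx k a ^ (a - 1)})),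
        ← map_pow, ← map_mul]
      exact Ideal.Quotient.eq_zero_iff_mem.2 (Ideal.subset_span rfl)
    rw [Ideal.Quotient.eq_zero_iff_mem, Ideal.mem_span_singleton] at h4
    obtain ⟨s, hs⟩ := h4
    exact ⟨s, by rw [hs, mul_comm]⟩
  · rintro ⟨s, rfl⟩
    rw [map_mul, map_mul, map_natCast, map_pow, gam_tx, pow_succ']
    have := hrel k a
    calc _ = gam k a s * ((a : HHTarget k a) * hX k a ^ (a - 1) * hZ k a) * hZ k a ^ j := by ring
      _ = 0 := by rw [this]; simp

theorem gam_mem (j : ℕ) (g : TruncPoly k a) : gam k a g * hZ k a ^ j ∈ hhTargetDeg k a j := by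
  obtain ⟨p, rfl⟩ := mk_surj_tx k a g
  rw [← Polynomial.aeval_algHom_apply, gam_tx, Polynomial.aeval_eq_sum_range, Finset.sum_mul]
  apply Submodule.sum_mem
  intro i _
  rw [smul_mul_assoc]
  apply Submodule.smul_mem
  apply Submodule.subset_span
  exact ⟨i, trivial, by simp⟩

theorem gam_surj (j : ℕ) (y : HHTarget k a) (hy : y ∈ hhTargetDeg k a j) :
    ∃ g, gam k a g * hZ k a ^ j = y := by
  have : hhTargetDeg k a j ≤ LinearMap.range ((LinearMap.mulRight k (hZ k a ^ j)).comp (gam k a).toLinearMap) := by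
    unfold hhTargetDeg
    rw [Submodule.span_le]
    rintro _ ⟨i, _, rfl⟩
    refine ⟨tx k a ^ i, ?_⟩
    change gam k a (tx k a ^ i) * hZ k a ^ j = _
    rw [map_pow, gam_tx]
    simp
  exact this hy

end alg

theorem equiv_of_ker {R E T : Type*} [AddCommGroup R] [AddCommGroup E] [AddCommGroup T]
    (φ : R →+ E) (ψ : R →+ T) (hφ : Function.Surjective φ) (hψ : Function.Surjective ψ)
    (h : ∀ r, φ r = 0 ↔ ψ r = 0) : ∃ e : E ≃+ T, ∀ r, e (φ r) = ψ r := by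
  have hk : φ.ker = ψ.ker := by ext r; exact h r
  let e1 := QuotientAddGroup.quotientKerEquivOfSurjective φ hφ
  let e2 := QuotientAddGroup.quotientKerEquivOfSurjective ψ hψ
  refine ⟨(e1.symm.trans (QuotientAddGroup.quotientAddEquivOfEq hk)).trans e2, fun r => ?_⟩
  have : e1.symm (φ r) = QuotientAddGroup.mk r := by
    rw [AddEquiv.symm_apply_eq]; rfl
  change e2 (QuotientAddGroup.quotientAddEquivOfEq hk (e1.symm (φ r))) = ψ r
  rw [this]; rfl

set_option maxHeartbeats 1000000 in
set_option synthInstance.maxHeartbeats 1000000 in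
/-- Let `Γ = k[x]/(x^a)` with `a ≥ 2`.  Then the even Hochschild
cohomology ring of `Γ` is `HH^{2*}(Γ) ≅ k[x,z]/(x^a, a·x^{a-1}·z)` where `x` lies in
`HH^0` and `z` in `HH^2` (internal degrees `|x| = 1`, `|z| = 0` for the `ℤ`-grading of
`Γ` by `|x| = 1`): there is a family of additive isomorphisms from `HH^{2j}(Γ) =
Ext^{2j}_{Γᵉ}(Γ,Γ)` onto the `z`-degree-`j` component of the right-hand side, carrying
the identity to `1` and Yoneda composition to ring multiplication.  The `Γᵉ`-module
structure on `Γ` is the usual one, hypothesised via `hbi`. -/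
theorem stmt13 (k : Type) [Field k] (a : ℕ) (ha : 2 ≤ a)
    [Module (TruncEnv k a) (TruncPoly k a)]
    [IsScalarTower k (TruncEnv k a) (TruncPoly k a)]
    (hbi : ∀ u v x : TruncPoly k a,
      ((u ⊗ₜ op v : TruncEnv k a)) • x = u * x * v)
    [HasExt.{1} (ModuleCat.{0} (TruncEnv k a))] :
    ∃ e : ∀ j : ℕ,
        Ext (ModuleCat.of (TruncEnv k a) (TruncPoly k a))
          (ModuleCat.of (TruncEnv k a) (TruncPoly k a)) (2 * j) ≃+ hhTargetDeg k a j,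
      ((e 0 (Ext.mk₀ (𝟙 (ModuleCat.of (TruncEnv k a) (TruncPoly k a)))) : HHTarget k a)
          = 1) ∧
      (∀ (i j : ℕ) (x : Ext (ModuleCat.of (TruncEnv k a) (TruncPoly k a))
            (ModuleCat.of (TruncEnv k a) (TruncPoly k a)) (2 * i))
          (y : Ext (ModuleCat.of (TruncEnv k a) (TruncPoly k a))
            (ModuleCat.of (TruncEnv k a) (TruncPoly k a)) (2 * j)),
        ((e (i + j) (x.comp y (by ring)) : HHTarget k a)) =
          (e i x : HHTarget k a) * (e j y : HHTarget k a)) := by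

  have hex := gen_main k a (tx k a) hbi (mk_surj_tx k a) (tx_pow k a)
    (fun A _ _ x hx => ⟨tlift k a x hx, tlift_tx k a x hx⟩)
  obtain ⟨φ, μ, h1, hμ, h2, h3, h4, h5⟩ := hex
  let ψ : ∀ j : ℕ, TruncEnv k a →+ hhTargetDeg k a j := fun j =>
    { toFun := fun r => ⟨gam k a (μ r) * hZ k a ^ j, gam_mem k a j _⟩
      map_zero' := by ext; simp
      map_add' := fun r s => by ext; simp [add_mul] }
  have hψ : ∀ j, Function.Surjective (ψ j) := by
    rintro j ⟨y, hy⟩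
    obtain ⟨g, rfl⟩ := gam_surj k a j y hy
    obtain ⟨r, rfl⟩ := hμ g
    exact ⟨r, rfl⟩
  have hk : ∀ j r, φ j r = 0 ↔ ψ j r = 0 := by
    intro j r
    rw [Subtype.ext_iff]
    change _ ↔ gam k a (μ r) * hZ k a ^ j = 0
    cases j with
    | zero => rw [pow_zero, mul_one, gam_inj]; exact h4 r
    | succ j => rw [gam_z]; exact h5 j r
  choose e he using fun j => equiv_of_ker (φ j) (ψ j) (h1 j) (hψ j) (hk j)
  refine ⟨e, ?_, ?_⟩
  · rw [← h2]
    have := congrArg Subtype.val (he 0 1)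
    refine this.trans ?_
    change gam k a (μ 1) * hZ k a ^ 0 = 1
    rw [map_one, map_one, pow_zero, mul_one]
  · intro i j x y
    obtain ⟨r, rfl⟩ := h1 i x
    obtain ⟨s, rfl⟩ := h1 j y
    have := congrArg (fun z => ((e (i + j) z : hhTargetDeg k a (i + j)) : HHTarget k a)) (h3 i j r s)
    refine this.trans ?_
    rw [he, he, he]
    change gam k a (μ (r * s)) * hZ k a ^ (i + j) = (gam k a (μ r) * hZ k a ^ i) * (gam k a (μ s) * hZ k a ^ j)
    rw [map_mul, map_mul, pow_add]
    ring
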